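/- Let g : ℝⁿ → ℝⁿ be convex, order-preserving and additively homogeneous with at least one harmonic vector, let C be its set of critical nodes, let u be super-harmonic with respect to g, and let v be the unique harmonic vector of g coinciding with u on C. Then v is the smallest super-harmonic vector dominating u on C: v is super-harmonic with v_i ≥ u_i for all i ∈ C, and every super-harmonic vector w satisfying w_i ≥ u_i for all i ∈ C satisfies w ≥ v. -/

import Mathlib

open Filter Topology

/-- The subdifferential of a (convex) self-map `g` of `ℝⁿ` at `u`: the set of matrices `M`
such that `g(x) − g(u) ≥ M(x − u)` componentwise for all `x`. -/
def Subdiff {n : ℕ} (g : (Fin n → ℝ) → (Fin n → ℝ)) (u : Fin n → ℝ) :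
    Set (Matrix (Fin n) (Fin n) ℝ) :=
  {M | ∀ (x : Fin n → ℝ) (i : Fin n), g u i + M.mulVec (x - u) i ≤ g x i}

/-- `F` is a recurrence class of the matrix `M`: a (strongly connected, arc-closed)
strongly connected component of the digraph with an arc `(i,j)` whenever `M i j > 0`,
such that every row of the `F×F` submatrix of `M` sums to `1`. -/
def IsRecClass {n : ℕ} (M : Matrix (Fin n) (Fin n) ℝ) (F : Finset (Fin n)) : Prop :=
  F.Nonempty ∧
  (∀ i ∈ F, ∀ j ∈ F, Relation.ReflTransGen (fun a b => 0 < M a b) i j) ∧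
  (∀ i ∈ F, ∀ j, 0 < M i j → j ∈ F) ∧
  (∀ i ∈ F, ∑ j ∈ F, M i j = 1)

/-- `i` is a critical node of `g`: `i` belongs to a recurrence class of some matrix in the
subdifferential of `g` at some harmonic vector of `g` (this does not depend on the choice
of the harmonic vector). -/
def IsCritical {n : ℕ} (g : (Fin n → ℝ) → (Fin n → ℝ)) (i : Fin n) : Prop :=
  ∃ u₀ : Fin n → ℝ, g u₀ = u₀ ∧
    ∃ M ∈ Subdiff g u₀, ∃ F : Finset (Fin n), IsRecClass M F ∧ i ∈ F

/-!
Convexity provides a subgradient matrix `M` of `g` at the harmonic vector `v`; monotonicity and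
subhomogeneity make it substochastic. If `w` is super-harmonic, then `z = w - v` satisfies
`M z ≤ g w - g v ≤ z`. Were the minimum of `z` negative, averaging over a row of `M` at a minimiser
would force that row to sum to `1` and to be carried by minimisers; so the set of minimisers would
be closed under the arcs of `M` and contain a recurrence class. Hence `w < v` at some
critical node, unless `v ≤ w`.
-/

section Subgradient

variable {E : Type*} [AddCommGroup E] [TopologicalSpace E] [IsTopologicalAddGroup E] [Module ℝ E]
  [ContinuousSMul ℝ E]

theorem exists_continuousLinearMap_add_le_of_convexOn {s : Set E} {f : E → ℝ} {u : E}
    (hs : IsOpen s) (hf : ConvexOn ℝ s f) (hfc : ContinuousOn f s) (hu : u ∈ s) :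
    ∃ ℓ : E →L[ℝ] ℝ, ∀ x ∈ s, f u + ℓ (x - u) ≤ f x := by
  have hopen : IsOpen {p : E × ℝ | p.1 ∈ s ∧ f p.1 < p.2} := by
    have hcont : ContinuousOn (fun p : E × ℝ => p.2 - f p.1) (Prod.fst ⁻¹' s) :=
      continuousOn_snd.sub (hfc.comp continuousOn_fst fun _ hp => hp)
    convert hcont.isOpen_inter_preimage (hs.preimage continuous_fst) (isOpen_Ioi (a := 0)) using 1
    ext p
    simp
  obtain ⟨φ, hφ⟩ := geometric_hahn_banach_open_point (x := (u, f u)) hf.convex_strict_epigraph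
    hopen (by simp)
  set c := φ (0, 1)
  have hφ_eq (x : E) (t : ℝ) : φ (x, t) = φ (x, 0) + t * c := by
    rw [← smul_eq_mul, ← map_smul, ← map_add]
    simp
  have hφ_lt {x : E} (hx : x ∈ s) {t : ℝ} (ht : f x < t) :
      φ (x, 0) + t * c < φ (u, 0) + f u * c := by
    simpa only [← hφ_eq] using hφ (x, t) ⟨hx, ht⟩
  have hc : c < 0 := by linarith [hφ_lt hu (lt_add_one (f u))]
  refine ⟨(-c)⁻¹ • φ.comp (.inl ℝ E ℝ), fun x hx => le_of_forall_gt_imp_ge_of_dense fun t ht => ?_⟩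
  have hslope : (-c)⁻¹ * (φ (x, 0) - φ (u, 0)) ≤ t - f u := by
    rw [inv_mul_le_iff₀ (neg_pos.2 hc)]
    linarith [hφ_lt hx ht]
  have happly : ((-c)⁻¹ • φ.comp (.inl ℝ E ℝ)) (x - u) = (-c)⁻¹ * (φ (x, 0) - φ (u, 0)) := by
    simp [← map_sub]
  linarith

end Subgradient

section Subdiff

variable {n : ℕ} {g : (Fin n → ℝ) → (Fin n → ℝ)} {u : Fin n → ℝ} {M : Matrix (Fin n) (Fin n) ℝ}

theorem subdiff_nonempty (hconv : ∀ i, ConvexOn ℝ Set.univ fun x => g x i) (u : Fin n → ℝ) :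
    (Subdiff g u).Nonempty := by
  choose ℓ hℓ using fun i => exists_continuousLinearMap_add_le_of_convexOn isOpen_univ (hconv i)
    ((hconv i).continuousOn isOpen_univ) (Set.mem_univ u)
  refine ⟨LinearMap.toMatrix' (LinearMap.pi fun i => (ℓ i).toLinearMap), fun x i => ?_⟩
  rw [LinearMap.toMatrix'_mulVec]
  exact hℓ i x (Set.mem_univ x)

theorem nonneg_of_mem_subdiff (hg : Monotone g) (hM : M ∈ Subdiff g u) (i j : Fin n) :
    0 ≤ M i j := by
  have hsub := hM (u - Pi.single j 1) i
  have hle : g (u - Pi.single j 1) i ≤ g u i :=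
    hg (sub_le_self u (Pi.single_nonneg.2 zero_le_one)) i
  simp only [sub_sub_cancel_left, Matrix.mulVec_neg, Matrix.mulVec_single_one, Pi.neg_apply,
    Matrix.col_apply] at hsub
  linarith

/-- Additive subhomogeneity of a self-map of `ι → ℝ`: translating the argument by a constant
`c ≥ 0` raises each coordinate by at most `c`. Additive homogeneity is the case of equality. -/
def IsAddSubhomogeneous {ι : Type*} (g : (ι → ℝ) → (ι → ℝ)) : Prop :=
  ∀ c : ℝ, 0 ≤ c → ∀ x : ι → ℝ, g (fun i => c + x i) ≤ fun i => c + g x i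

theorem sum_row_le_one_of_mem_subdiff (hg : IsAddSubhomogeneous g) (hM : M ∈ Subdiff g u)
    (i : Fin n) : ∑ j, M i j ≤ 1 := by
  have hsub := hM (fun j => 1 + u j) i
  have hle : g (fun j => 1 + u j) i ≤ 1 + g u i := hg 1 zero_le_one u i
  have hrow : M.mulVec ((fun j => 1 + u j) - u) i = ∑ j, M i j := by
    simp [Matrix.mulVec, dotProduct]
  linarith

end Subdiff

/-- A finite set of nodes that no arc of the digraph `r` leaves. -/
def IsArcClosed {α : Type*} (r : α → α → Prop) (S : Finset α) : Prop :=
  ∀ i ∈ S, ∀ j, r i j → j ∈ S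

theorem IsArcClosed.exists_subset_stronglyConnected {α : Type*} {r : α → α → Prop}
    {S : Finset α} (hS : IsArcClosed r S) (hne : S.Nonempty) :
    ∃ F ⊆ S, F.Nonempty ∧ IsArcClosed r F ∧ ∀ i ∈ F, ∀ j ∈ F, Relation.ReflTransGen r i j := by
  classical
  obtain ⟨F, hFS, hF⟩ := exists_minimal_le_of_wellFoundedLT
    (fun T : Finset α => T.Nonempty ∧ IsArcClosed r T) S ⟨hne, hS⟩
  refine ⟨F, hFS, hF.prop.1, hF.prop.2, fun i hi j hj => ?_⟩
  let R := F.filter (Relation.ReflTransGen r i)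
  have hR : R.Nonempty ∧ IsArcClosed r R := by
    refine ⟨⟨i, Finset.mem_filter.2 ⟨hi, .refl⟩⟩, fun a ha b hab => ?_⟩
    obtain ⟨haF, hia⟩ := Finset.mem_filter.1 ha
    exact Finset.mem_filter.2 ⟨hF.prop.2 a haF b hab, hia.tail hab⟩
  exact (Finset.mem_filter.1 (hF.le_of_le hR (Finset.filter_subset _ _) hj)).2

theorem IsArcClosed.exists_isRecClass_subset {n : ℕ} {M : Matrix (Fin n) (Fin n) ℝ}
    {S : Finset (Fin n)} (hS : IsArcClosed (fun i j => 0 < M i j) S) (hne : S.Nonempty)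
    (hM : ∀ i j, 0 ≤ M i j) (hsum : ∀ i ∈ S, ∑ j, M i j = 1) : ∃ F ⊆ S, IsRecClass M F := by
  obtain ⟨F, hFS, hFne, hF, hconn⟩ := hS.exists_subset_stronglyConnected hne
  refine ⟨F, hFS, hFne, hconn, hF, fun i hi => ?_⟩
  have hzero (j : Fin n) (hj : j ∉ F) : M i j = 0 :=
    ((hM i j).eq_or_lt.resolve_right fun hpos => hj (hF i hi j hpos)).symm
  rw [Finset.sum_subset F.subset_univ fun j _ => hzero j, hsum i (hFS hi)]

theorem sum_eq_one_and_forall_eq_of_sum_mul_le {ι R : Type*} [Fintype ι] [CommRing R]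
    [LinearOrder R] [IsStrictOrderedRing R] {a z : ι → R} {m : R} (ha : ∀ k, 0 ≤ a k)
    (hsum : ∑ k, a k ≤ 1) (hm : m < 0) (hz : ∀ k, m ≤ z k) (hle : ∑ k, a k * z k ≤ m) :
    ∑ k, a k = 1 ∧ ∀ k, 0 < a k → z k = m := by
  have hterm : ∀ k ∈ Finset.univ, a k * m ≤ a k * z k := fun k _ =>
    mul_le_mul_of_nonneg_left (hz k) (ha k)
  have hlower : m ≤ (∑ k, a k) * m := le_mul_of_le_one_left hm.le hsum
  have hmiddle : (∑ k, a k) * m ≤ ∑ k, a k * z k := by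
    simpa only [Finset.sum_mul] using Finset.sum_le_sum hterm
  constructor
  · exact mul_right_cancel₀ hm.ne (by linarith : (∑ k, a k) * m = 1 * m)
  · intro k hk
    have heq : ∑ k, a k * m = ∑ k, a k * z k := by
      rw [← Finset.sum_mul]
      linarith
    have hterm_eq := (Finset.sum_eq_sum_iff_of_le hterm).1 heq k (Finset.mem_univ k)
    exact (mul_left_cancel₀ hk.ne' hterm_eq).symm

theorem nonneg_of_mulVec_le_of_isRecClass {n : ℕ} {M : Matrix (Fin n) (Fin n) ℝ}
    {z : Fin n → ℝ} (hM : ∀ i j, 0 ≤ M i j) (hsum : ∀ i, ∑ j, M i j ≤ 1) (hz : M.mulVec z ≤ z)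
    (hrec : ∀ F, IsRecClass M F → ∃ i ∈ F, 0 ≤ z i) : 0 ≤ z := by
  by_contra hneg
  obtain ⟨i₀, hi₀⟩ : ∃ i, z i < 0 := by simpa [Pi.le_def] using hneg
  obtain ⟨m, -, hm⟩ := Finset.univ.exists_min_image z ⟨i₀, Finset.mem_univ i₀⟩
  have hmin (j : Fin n) : z m ≤ z j := hm j (Finset.mem_univ j)
  have hm_neg : z m < 0 := (hmin i₀).trans_lt hi₀
  let S := Finset.univ.filter fun i => z i = z m
  have hrow (i : Fin n) (hi : i ∈ S) : ∑ j, M i j = 1 ∧ ∀ j, 0 < M i j → z j = z m :=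
    sum_eq_one_and_forall_eq_of_sum_mul_le (hM i) (hsum i) hm_neg hmin
      ((hz i).trans_eq (Finset.mem_filter.1 hi).2)
  have hS : IsArcClosed (fun i j => 0 < M i j) S := fun i hi j hij =>
    Finset.mem_filter.2 ⟨Finset.mem_univ j, (hrow i hi).2 j hij⟩
  obtain ⟨F, hFS, hF⟩ := hS.exists_isRecClass_subset ⟨m, by simp [S]⟩ hM fun i hi => (hrow i hi).1
  obtain ⟨i, hiF, hi⟩ := hrec F hF
  have hi_eq : z i = z m := (Finset.mem_filter.1 (hFS hiF)).2
  linarith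

theorem le_of_superharmonic_of_forall_isCritical_le {n : ℕ} {g : (Fin n → ℝ) → (Fin n → ℝ)}
    (hconv : ∀ i, ConvexOn ℝ Set.univ fun x => g x i) (hmono : Monotone g)
    (hsub : IsAddSubhomogeneous g) {v w : Fin n → ℝ} (hv : g v = v) (hw : g w ≤ w)
    (hvw : ∀ i, IsCritical g i → v i ≤ w i) : v ≤ w := by
  obtain ⟨M, hM⟩ := subdiff_nonempty hconv v
  have hz : M.mulVec (w - v) ≤ w - v := fun i => by
    have hgrad := hM w i
    rw [hv] at hgrad
    exact le_sub_iff_add_le'.2 (hgrad.trans (hw i))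
  refine sub_nonneg.1 (nonneg_of_mulVec_le_of_isRecClass (nonneg_of_mem_subdiff hmono hM)
    (sum_row_le_one_of_mem_subdiff hsub hM) hz fun F hF => ?_)
  obtain ⟨i, hi⟩ := hF.1
  exact ⟨i, hi, sub_nonneg.2 (hvw i ⟨v, hv, M, hM, F, hF, hi⟩)⟩

theorem harmonic_extension_is_smallest_superharmonic_general {n : ℕ}
    {g : (Fin n → ℝ) → (Fin n → ℝ)} (hconv : ∀ i, ConvexOn ℝ Set.univ fun x => g x i)
    (hmono : Monotone g) (hsub : IsAddSubhomogeneous g) {u v : Fin n → ℝ} (hv : g v = v)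
    (hvC : ∀ i, IsCritical g i → v i = u i) :
    IsLeast {w | g w ≤ w ∧ ∀ i, IsCritical g i → u i ≤ w i} v :=
  ⟨⟨hv.le, fun i hi => (hvC i hi).ge⟩, fun _ hw =>
    le_of_superharmonic_of_forall_isCritical_le hconv hmono hsub hv hw.1 fun i hi =>
      (hvC i hi).trans_le (hw.2 i hi)⟩

/-- Let `g : ℝⁿ → ℝⁿ` be convex, order-preserving and additively
homogeneous with at least one harmonic vector, let `C` be its set of critical nodes, let
`u` be super-harmonic and let `v` be the (unique) harmonic vector coinciding with `u` on
`C`.  Then `v` is the smallest super-harmonic vector dominating `u` on `C`: `v` is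
super-harmonic, dominates `u` on `C`, and every super-harmonic vector dominating `u` on
`C` dominates `v`. -/
theorem harmonic_extension_is_smallest_superharmonic
    (n : ℕ) (g : (Fin n → ℝ) → (Fin n → ℝ))
    (hconv : ∀ i, ConvexOn ℝ Set.univ (fun x => g x i))
    (hop : ∀ x y : Fin n → ℝ, x ≤ y → g x ≤ g y)
    (hah : ∀ (lam : ℝ) (x : Fin n → ℝ), g (fun i => lam + x i) = fun i => lam + g x i)
    (u₀ : Fin n → ℝ) (hu₀ : g u₀ = u₀)
    (u : Fin n → ℝ) (hu : g u ≤ u)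
    (v : Fin n → ℝ) (hv : g v = v) (hvC : ∀ i : Fin n, IsCritical g i → v i = u i) :
    (g v ≤ v ∧ ∀ i : Fin n, IsCritical g i → u i ≤ v i) ∧
    ∀ w : Fin n → ℝ, g w ≤ w → (∀ i : Fin n, IsCritical g i → u i ≤ w i) → v ≤ w := by
  have hleast := harmonic_extension_is_smallest_superharmonic_general hconv hop
    (fun lam _ x => (hah lam x).le) hv hvC
  exact ⟨hleast.1, fun w hw hwC => hleast.2 ⟨hw, hwC⟩⟩
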